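/- Fix c ∈ ℝ, r > 0, and σ² > 0, and define D(ω) := ∫_{c−r}^{c+r} φ(t; ω, σ²) dt, the probability that a Gaussian signal centered at ω with variance σ² lands in the window [c−r, c+r]. Then D is symmetric about c (D(c+x) = D(c−x) for all x) and strictly decreasing in the distance to c: for all ω, ω′ with |ω − c| < |ω′ − c|, D(ω) > D(ω′). -/

import Mathlib

open MeasureTheory Real Filter

/-- The Gaussian density with mean `m` and variance `v`. -/
noncomputable def gauss (x m v : ℝ) : ℝ :=
  (Real.sqrt (2 * Real.pi * v))⁻¹ * Real.exp (-(x - m) ^ 2 / (2 * v))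

/-- `D(ω)`: the probability a Gaussian signal centered at `ω` lands in `[c−r, c+r]`. -/
noncomputable def winProb (c r v ω : ℝ) : ℝ :=
  ∫ t in Set.Icc (c - r) (c + r), gauss t ω v

/-!
The probability `D(ω)` is the integral of the centered density `f` over the window of radius `r`
about `ω - c`, which is even in `ω - c` because `f` is. Moving the center of that window from
`x ≥ 0` to `y > x` changes the integral by `∫ u in x..y, (f (u + r) - f (u - r))`, and since `f` is
even and decreasing on `[0, ∞)`, the integrand is negative by `|u - r| < |u + r|`.
-/

section EvenFunction

variable {α β : Type*} [AddCommGroup α] [LinearOrder α] {f : α → β}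

lemma apply_abs_of_even (hf : f.Even) (x : α) : f |x| = f x := by
  rcases abs_choice x with h | h <;> simp only [h, hf x]

lemma apply_lt_apply_of_even_of_abs_lt_abs [IsOrderedAddMonoid α] [Preorder β] (hf : f.Even)
    (hanti : StrictAntiOn f (Set.Ici 0)) {x y : α} (hxy : |x| < |y|) : f y < f x := by
  rw [← apply_abs_of_even hf x, ← apply_abs_of_even hf y]
  exact hanti (abs_nonneg x) (abs_nonneg y) hxy

end EvenFunction

section IntervalIntegrable

lemma intervalIntegrable_comp_add_right {E : Type*} [NormedAddCommGroup E] {f : ℝ → E}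
    (hf : ∀ a b, IntervalIntegrable f volume a b) (d a b : ℝ) :
    IntervalIntegrable (fun u ↦ f (u + d)) volume a b := by
  simpa only [add_sub_cancel_right] using (hf (a + d) (b + d)).comp_add_right d

lemma intervalIntegrable_of_even_of_antitoneOn {f : ℝ → ℝ} (hf : f.Even)
    (hanti : AntitoneOn f (Set.Ici 0)) (a b : ℝ) : IntervalIntegrable f volume a b := by
  refine intervalIntegrable_of_even (fun x ↦ (hf x).symm) fun x hx ↦ ?_
  refine (hanti.mono ?_).intervalIntegrable
  rw [Set.uIcc_of_le hx.le]
  exact Set.Icc_subset_Ici_self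

end IntervalIntegrable

section WindowIntegral

/-- The integral of `f` over the window of radius `r` centered at `x`. It is an oriented interval
integral, so a negative `r` changes the sign. -/
noncomputable def windowIntegral {E : Type*} [NormedAddCommGroup E] [NormedSpace ℝ E]
    (f : ℝ → E) (r x : ℝ) : E :=
  ∫ s in (x - r)..(x + r), f s

variable {E : Type*} [NormedAddCommGroup E] [NormedSpace ℝ E]

lemma even_windowIntegral {f : ℝ → E} (hf : f.Even) (r : ℝ) : (windowIntegral f r).Even := by
  intro x
  calc windowIntegral f r (-x)
      = ∫ s in -(x + r)..-(x - r), f s := by rw [windowIntegral]; congr 1 <;> ring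
    _ = ∫ s in (x - r)..(x + r), f (-s) := (intervalIntegral.integral_comp_neg f).symm
    _ = windowIntegral f r x := by simp only [hf _, windowIntegral]

lemma windowIntegral_sub_windowIntegral {f : ℝ → E}
    (hf : ∀ a b, IntervalIntegrable f volume a b) (r x y : ℝ) :
    windowIntegral f r x - windowIntegral f r y = ∫ u in x..y, (f (u - r) - f (u + r)) := by
  have hsub : IntervalIntegrable (fun u ↦ f (u - r)) volume x y :=
    intervalIntegrable_comp_add_right hf (-r) x y
  rw [intervalIntegral.integral_sub hsub (intervalIntegrable_comp_add_right hf r x y),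
    intervalIntegral.integral_comp_sub_right, intervalIntegral.integral_comp_add_right]
  exact intervalIntegral.integral_interval_sub_interval_comm (hf _ _) (hf _ _) (hf _ _)

lemma strictAntiOn_windowIntegral {f : ℝ → ℝ} (hf : f.Even) (hanti : StrictAntiOn f (Set.Ici 0))
    {r : ℝ} (hr : 0 < r) : StrictAntiOn (windowIntegral f r) (Set.Ici 0) := by
  intro x hx y _ hxy
  have hint := intervalIntegrable_of_even_of_antitoneOn hf hanti.antitoneOn
  rw [← sub_pos, windowIntegral_sub_windowIntegral hint]
  refine intervalIntegral.intervalIntegral_pos_of_pos_on ?_ (fun u hu ↦ ?_) hxy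
  · exact (intervalIntegrable_comp_add_right hint (-r) x y).sub
      (intervalIntegrable_comp_add_right hint r x y)
  · have hu₀ : 0 < u := lt_of_le_of_lt hx hu.1
    have habs : |u - r| < |u + r| := sq_lt_sq.1 (by nlinarith [mul_pos hu₀ hr])
    exact sub_pos.2 (apply_lt_apply_of_even_of_abs_lt_abs hf hanti habs)

end WindowIntegral

section Gaussian

lemma gauss_eq_gauss_sub (x m v : ℝ) : gauss x m v = gauss (m - x) 0 v := by
  rw [gauss, gauss, sub_zero, sub_sq_comm]

lemma even_gauss_zero (v : ℝ) : (gauss · 0 v).Even := by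
  intro x
  simp only [gauss, sub_zero, neg_sq]

lemma strictAntiOn_gauss (m : ℝ) {v : ℝ} (hv : 0 < v) :
    StrictAntiOn (gauss · m v) (Set.Ici m) := by
  intro x hx y _ hxy
  have hx₀ : 0 ≤ x - m := sub_nonneg.2 hx
  simp only [gauss]
  gcongr

lemma winProb_eq_windowIntegral (c v ω : ℝ) {r : ℝ} (hr : 0 ≤ r) :
    winProb c r v ω = windowIntegral (gauss · 0 v) r (ω - c) := by
  calc winProb c r v ω
      = ∫ t in (c - r)..(c + r), gauss (ω - t) 0 v := by
        rw [winProb, integral_Icc_eq_integral_Ioc,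
          ← intervalIntegral.integral_of_le (by linarith)]
        simp only [gauss_eq_gauss_sub _ ω]
    _ = ∫ s in (ω - (c + r))..(ω - (c - r)), gauss s 0 v :=
        intervalIntegral.integral_comp_sub_left (gauss · 0 v) ω
    _ = windowIntegral (gauss · 0 v) r (ω - c) := by
        rw [windowIntegral]; congr 1 <;> ring

end Gaussian

/-- The window probability is symmetric about `c` and strictly decreasing in the distance
of the signal mean `ω` to `c`. -/
theorem stmt_14 (c r v : ℝ) (hr : 0 < r) (hv : 0 < v) :
    (∀ x : ℝ, winProb c r v (c + x) = winProb c r v (c - x)) ∧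
    (∀ ω ω' : ℝ, |ω - c| < |ω' - c| → winProb c r v ω' < winProb c r v ω) := by
  have heven : (windowIntegral (gauss · 0 v) r).Even := even_windowIntegral (even_gauss_zero v) r
  have hanti : StrictAntiOn (windowIntegral (gauss · 0 v) r) (Set.Ici 0) :=
    strictAntiOn_windowIntegral (even_gauss_zero v) (strictAntiOn_gauss 0 hv) hr
  simp only [winProb_eq_windowIntegral c v _ hr.le]
  refine ⟨fun x ↦ ?_, fun ω ω' h ↦ apply_lt_apply_of_even_of_abs_lt_abs heven hanti h⟩
  rw [add_sub_cancel_left, sub_sub_cancel_left, heven]
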